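/- arXiv:2111.14590 — 3 statements merged into one kernel-verified Lean document; each statement's English description precedes it below -/
import Mathlib

section
/- Let T ≥ 2 and p ≥ 1 be integers and let V̂₁, …, V̂_T be vectors in ℝ^p whose partial sums Ŝ_t = Σ_{j=1}^t V̂_j satisfy Ŝ_T = 0. For the Bartlett kernel K_BT(x) = 1 − |x| for |x| ≤ 1 and K_BT(x) = 0 otherwise, the fixed-b long-run variance estimator collapses to an average of outer products of partial sums: T^{-1} Σ_{i=1}^{T} Σ_{j=1}^{T} K_BT((i−j)/T) V̂_i V̂_j′ = 2 T^{-2} Σ_{i=1}^{T−1} Ŝ_i Ŝ_i′. -/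
open Finset

/-- The Bartlett kernel: `K_BT x = 1 − |x|` for `|x| ≤ 1` and `0` otherwise. -/
noncomputable def bartlettKernel (x : ℝ) : ℝ := if |x| ≤ 1 then 1 - |x| else 0

/-- Summation by parts for the linear weights `n + 1 - i`. -/
lemma sum_linear_weight_eq_sum_partial_sums (a : ℕ → ℝ) (n : ℕ) :
    ∑ i ∈ Icc 1 n, ((n : ℝ) + 1 - i) * a i = ∑ t ∈ Icc 1 n, ∑ i ∈ Icc 1 t, a i := by
  induction n with
  | zero => simp
  | succ n ih =>
    rw [sum_Icc_succ_top (by omega), sum_Icc_succ_top (by omega), ← ih,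
      sum_Icc_succ_top (by omega), ← add_assoc, ← sum_add_distrib]
    push_cast
    congr 1
    · exact sum_congr rfl fun i _ => by ring
    · ring

/-- Double summation by parts for the weights `|i - j|`. -/
lemma sum_sum_abs_sub_mul_mul (a b : ℕ → ℝ) (n : ℕ) :
    ∑ i ∈ Icc 1 n, ∑ j ∈ Icc 1 n, |(i : ℝ) - j| * (a i * b j)
      = (∑ i ∈ Icc 1 n, a i) * ∑ t ∈ Icc 1 n, ∑ j ∈ Icc 1 t, b j
        + (∑ j ∈ Icc 1 n, b j) * ∑ t ∈ Icc 1 n, ∑ i ∈ Icc 1 t, a i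
        - 2 * ∑ t ∈ Icc 1 n, (∑ i ∈ Icc 1 t, a i) * ∑ j ∈ Icc 1 t, b j := by
  induction n with
  | zero => simp
  | succ n ih =>
    have abs_sub_top : ∀ i ∈ Icc 1 n, |(i : ℝ) - (n + 1)| = n + 1 - i := fun i hi => by
      have : (i : ℝ) ≤ n := by exact_mod_cast (mem_Icc.mp hi).2
      rw [abs_of_nonpos (by linarith)]
      ring
    have last_column : ∑ i ∈ Icc 1 n, |(i : ℝ) - (n + 1)| * (a i * b (n + 1))
        = b (n + 1) * ∑ t ∈ Icc 1 n, ∑ i ∈ Icc 1 t, a i := by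
      rw [← sum_linear_weight_eq_sum_partial_sums, mul_sum]
      exact sum_congr rfl fun i hi => by rw [abs_sub_top i hi]; ring
    have last_row : ∑ j ∈ Icc 1 n, |(n : ℝ) + 1 - j| * (a (n + 1) * b j)
        = a (n + 1) * ∑ t ∈ Icc 1 n, ∑ j ∈ Icc 1 t, b j := by
      rw [← sum_linear_weight_eq_sum_partial_sums, mul_sum]
      exact sum_congr rfl fun j hj => by rw [abs_sub_comm, abs_sub_top j hj]; ring
    simp only [sum_Icc_succ_top (Nat.le_add_left 1 n), sum_add_distrib, ih]
    push_cast
    rw [last_column, last_row, sub_self, abs_zero]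
    ring

/-- On lags of a sample of size `T`, the Bartlett kernel takes its triangular branch. -/
lemma bartlettKernel_sub_div {T i j : ℕ} (hi : i ∈ Icc 1 T) (hj : j ∈ Icc 1 T) :
    bartlettKernel (((i : ℝ) - j) / T) = 1 - |(i : ℝ) - j| / T := by
  rw [mem_Icc] at hi hj
  have one_le_i : (1 : ℝ) ≤ i := by exact_mod_cast hi.1
  have i_le : (i : ℝ) ≤ T := by exact_mod_cast hi.2
  have one_le_j : (1 : ℝ) ≤ j := by exact_mod_cast hj.1
  have j_le : (j : ℝ) ≤ T := by exact_mod_cast hj.2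
  have abs_div_eq : |((i : ℝ) - j) / T| = |(i : ℝ) - j| / T := by
    rw [abs_div, Nat.abs_cast]
  rw [bartlettKernel, abs_div_eq, if_pos]
  exact div_le_one_of_le₀ (abs_le.mpr ⟨by linarith, by linarith⟩) (Nat.cast_nonneg T)

/-- **Bartlett fixed-b LRV estimator as an average of outer products of partial sums.**
If the partial sums `Ŝ t = ∑_{j=1}^t V̂ j` satisfy `Ŝ T = 0`, then
`T⁻¹ ∑_{i=1}^T ∑_{j=1}^T K_BT((i−j)/T) V̂ᵢ V̂ⱼ' = 2 T⁻² ∑_{i=1}^{T−1} Ŝᵢ Ŝᵢ'`. -/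
theorem bartlett_fixed_b_eq_sum_outer_partial_sums
    (T p : ℕ) (hT : 2 ≤ T) (hp : 1 ≤ p) (V : ℕ → Fin p → ℝ)
    (S : ℕ → Fin p → ℝ) (hS : ∀ t, S t = ∑ j ∈ Icc 1 t, V j)
    (hST : S T = 0) :
    (T : ℝ)⁻¹ • ∑ i ∈ Icc 1 T, ∑ j ∈ Icc 1 T,
        bartlettKernel (((i : ℝ) - (j : ℝ)) / T) • Matrix.vecMulVec (V i) (V j)
      = (2 * ((T : ℝ) ^ 2)⁻¹) • ∑ i ∈ Icc 1 (T - 1), Matrix.vecMulVec (S i) (S i) := by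
  ext k l
  have partial_sum_apply : ∀ t m, S t m = ∑ j ∈ Icc 1 t, V j m := fun t m => by
    rw [hS, Finset.sum_apply]
  have total_eq_zero : ∀ m, ∑ j ∈ Icc 1 T, V j m = 0 := fun m => by
    rw [← partial_sum_apply, hST, Pi.zero_apply]
  have kernel_sum : ∑ i ∈ Icc 1 T, ∑ j ∈ Icc 1 T,
        bartlettKernel (((i : ℝ) - j) / T) * (V i k * V j l)
      = (∑ i ∈ Icc 1 T, V i k) * (∑ j ∈ Icc 1 T, V j l)
        - (T : ℝ)⁻¹ * ∑ i ∈ Icc 1 T, ∑ j ∈ Icc 1 T, |(i : ℝ) - j| * (V i k * V j l) := by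
    rw [sum_mul_sum]
    simp only [mul_sum, ← sum_sub_distrib]
    refine sum_congr rfl fun i hi => sum_congr rfl fun j hj => ?_
    rw [bartlettKernel_sub_div hi hj]
    ring
  have drop_last : ∑ t ∈ Icc 1 T, S t k * S t l = ∑ t ∈ Icc 1 (T - 1), S t k * S t l := by
    obtain ⟨n, rfl⟩ : ∃ n, T = n + 1 := ⟨T - 1, by omega⟩
    simp [sum_Icc_succ_top (Nat.le_add_left 1 n), hST]
  simp only [Matrix.smul_apply, Matrix.sum_apply, Matrix.vecMulVec_apply, smul_eq_mul]
  rw [kernel_sum, sum_sum_abs_sub_mul_mul (fun i => V i k) (fun j => V j l), ← drop_last]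
  simp only [total_eq_zero, partial_sum_apply]
  ring
end

section
/- Let G : [0,1]² → ℝ be continuous with |G(r,s)| ≤ 2 for all r, s ∈ [0,1]. Then for every integer m ≥ 1, using the cyclic convention τ_{m+1} = τ₁, | ∫_{[0,1]^m} ∏_{j=1}^m G(τ_j, τ_{j+1}) dτ₁ ⋯ dτ_m | ≤ 2 ( sup_{s ∈ [0,1]} ∫₀¹ |G(r,s)| dr )^{m−1}. -/
open MeasureTheory intervalIntegral

open scoped ENNReal

/-- If all column integrals of a nonnegative kernel `F` are at most `C`, then the integral of the
chain product `∏ i, F (τ i) (τ (i + 1))` with `n` links is at most `C ^ n` times the total mass. -/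
lemma lintegral_prod_chain_le {α : Type*} [MeasurableSpace α] (μ : Measure α) [SigmaFinite μ]
    {F : α → α → ℝ≥0∞} (hF : Measurable (Function.uncurry F)) {C : ℝ≥0∞}
    (hC : ∀ s, ∫⁻ r, F r s ∂μ ≤ C) (n : ℕ) :
    ∫⁻ τ : Fin (n + 1) → α, ∏ i : Fin n, F (τ i.castSucc) (τ i.succ) ∂Measure.pi (fun _ => μ)
      ≤ C ^ n * μ Set.univ := by
  have hchain (k : ℕ) : Measurable fun τ : Fin (k + 1) → α =>
      ∏ i : Fin k, F (τ i.castSucc) (τ i.succ) :=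
    Finset.measurable_fun_prod _ fun i _ => hF.comp
      (g := Function.uncurry F) (f := fun τ : Fin (k + 1) → α => (τ i.castSucc, τ i.succ))
      ((measurable_pi_apply i.castSucc).prodMk (measurable_pi_apply i.succ))
  induction n with
  | zero => simp [Measure.pi_univ]
  | succ n ih =>
    have hmp := (measurePreserving_piFinSuccAbove (fun _ : Fin (n + 2) => μ) 0).symm
    have hlink : Measurable fun p : α × (Fin (n + 1) → α) => F p.1 (p.2 0) :=
      hF.comp (measurable_fst.prodMk ((measurable_pi_apply 0).comp measurable_snd))
    rw [← hmp.lintegral_comp (hchain (n + 1))]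
    calc
      _ = ∫⁻ p : α × (Fin (n + 1) → α),
            F p.1 (p.2 0) * ∏ i : Fin n, F (p.2 i.castSucc) (p.2 i.succ)
            ∂μ.prod (Measure.pi fun _ => μ) := by
          refine lintegral_congr fun p => ?_
          rw [Fin.prod_univ_succ]
          simp [MeasurableEquiv.piFinSuccAbove, Fin.insertNthEquiv]
      _ = ∫⁻ τ : Fin (n + 1) → α, (∫⁻ r, F r (τ 0) ∂μ) *
            ∏ i : Fin n, F (τ i.castSucc) (τ i.succ) ∂Measure.pi fun _ => μ := by
          refine (lintegral_prod_symm' _ (hlink.mul ((hchain n).comp measurable_snd))).trans ?_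
          refine lintegral_congr fun τ => ?_
          simp only [Pi.mul_apply, Function.comp_apply]
          exact lintegral_mul_const _ (hF.comp measurable_prodMk_right)
      _ ≤ ∫⁻ τ : Fin (n + 1) → α, C *
            ∏ i : Fin n, F (τ i.castSucc) (τ i.succ) ∂Measure.pi fun _ => μ := by
          gcongr with τ
          exact hC _
      _ = C * ∫⁻ τ : Fin (n + 1) → α,
            ∏ i : Fin n, F (τ i.castSucc) (τ i.succ) ∂Measure.pi fun _ => μ :=
          lintegral_const_mul _ (hchain n)
      _ ≤ C * (C ^ n * μ Set.univ) := by gcongr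
      _ = C ^ (n + 1) * μ Set.univ := by rw [pow_succ']; ring

/-- For a bounded kernel on a measure space, the integral of a cyclic product of `n + 1` factors is
at most `B * C ^ n` times the total mass, where `B` bounds the kernel and `C` its column
integrals. -/
lemma lintegral_prod_cycle_le {α : Type*} [MeasurableSpace α] (μ : Measure α) [SigmaFinite μ]
    {F : α → α → ℝ≥0∞} (hF : Measurable (Function.uncurry F)) {B C : ℝ≥0∞}
    (hB : ∀ r s, F r s ≤ B) (hBtop : B ≠ ∞) (hC : ∀ s, ∫⁻ r, F r s ∂μ ≤ C) (n : ℕ) :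
    ∫⁻ τ : Fin (n + 1) → α, ∏ j, F (τ j) (τ (j + 1)) ∂Measure.pi (fun _ => μ)
      ≤ B * (C ^ n * μ Set.univ) := by
  calc
    _ ≤ ∫⁻ τ : Fin (n + 1) → α, B * ∏ i : Fin n, F (τ i.castSucc) (τ i.succ)
          ∂Measure.pi fun _ => μ := by
        refine lintegral_mono fun τ => ?_
        rw [Fin.prod_univ_castSucc, mul_comm]
        simp only [Fin.coeSucc_eq_succ]
        gcongr
        exact hB _ _
    _ ≤ B * (C ^ n * μ Set.univ) := by
        rw [lintegral_const_mul' _ _ hBtop]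
        gcongr
        exact lintegral_prod_chain_le μ hF hC n

/-- **Cyclic-product integral bound.** For a continuous `G : [0,1]² → ℝ` bounded by `2`,
with the cyclic convention `τ_{m+1} = τ₁`,
`|∫_{[0,1]^m} ∏_{j=1}^m G(τ_j, τ_{j+1}) dτ| ≤ 2 (sup_{s ∈ [0,1]} ∫₀¹ |G(r,s)| dr)^{m−1}`. -/
theorem cyclic_product_integral_bound
    (m : ℕ) [NeZero m] (G : ℝ → ℝ → ℝ)
    (hGcont : ContinuousOn (fun p : ℝ × ℝ => G p.1 p.2)
      (Set.Icc (0:ℝ) 1 ×ˢ Set.Icc (0:ℝ) 1))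
    (hGbd : ∀ r ∈ Set.Icc (0:ℝ) 1, ∀ s ∈ Set.Icc (0:ℝ) 1, |G r s| ≤ 2) :
    |∫ τ : Fin m → ℝ in Set.univ.pi (fun _ => Set.Icc (0:ℝ) 1),
        ∏ j : Fin m, G (τ j) (τ (j + 1))|
      ≤ 2 * (sSup ((fun s => ∫ r in (0:ℝ)..1, |G r s|) '' Set.Icc (0:ℝ) 1)) ^ (m - 1) := by
  obtain ⟨n, rfl⟩ := Nat.exists_eq_succ_of_ne_zero (NeZero.ne m)
  set S := sSup ((fun s => ∫ r in (0:ℝ)..1, |G r s|) '' Set.Icc (0:ℝ) 1)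
  -- Extend `G` continuously from the unit square to the plane.
  let c : ℝ → ℝ := fun x => Set.projIcc (0:ℝ) 1 zero_le_one x
  have hc_mem (x : ℝ) : c x ∈ Set.Icc (0:ℝ) 1 := (Set.projIcc (0:ℝ) 1 zero_le_one x).2
  have hc_eq {x : ℝ} (hx : x ∈ Set.Icc (0:ℝ) 1) : c x = x := by
    simp [c, Set.projIcc_of_mem zero_le_one hx]
  have hc : Continuous c := continuous_subtype_val.comp continuous_projIcc
  let H : ℝ → ℝ → ℝ := fun r s => G (c r) (c s)
  have hH : Continuous (Function.uncurry H) :=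
    hGcont.comp_continuous (f := fun p : ℝ × ℝ => (c p.1, c p.2)) (by fun_prop)
      fun p => ⟨hc_mem _, hc_mem _⟩
  have hHbd (r s : ℝ) : |H r s| ≤ 2 := hGbd _ (hc_mem r) _ (hc_mem s)
  have hcol (s : ℝ) : ∫ r in (0:ℝ)..1, |H r s| = ∫ r in (0:ℝ)..1, |G r (c s)| := by
    refine integral_congr fun r hr => ?_
    rw [Set.uIcc_of_le zero_le_one] at hr
    simp only [H, hc_eq hr]
  have hHcol (s : ℝ) : Continuous fun r => |H r s| :=
    (hH.comp (Continuous.prodMk_left s)).abs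
  have hbdd : BddAbove ((fun s => ∫ r in (0:ℝ)..1, |G r s|) '' Set.Icc (0:ℝ) 1) := by
    refine ⟨2, ?_⟩
    rintro _ ⟨s, hs, rfl⟩
    have h := hcol s
    rw [hc_eq hs] at h
    simp only [← h]
    calc ∫ r in (0:ℝ)..1, |H r s| ≤ ∫ _ in (0:ℝ)..1, (2:ℝ) :=
          integral_mono_on zero_le_one ((hHcol s).intervalIntegrable _ _)
            intervalIntegrable_const fun r _ => hHbd r s
      _ = 2 := by simp
  have hle (s : ℝ) : ∫ r in (0:ℝ)..1, |H r s| ≤ S :=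
    (hcol s).trans_le (le_csSup hbdd ⟨c s, hc_mem s, rfl⟩)
  have hS0 : 0 ≤ S :=
    (integral_nonneg zero_le_one fun r _ => abs_nonneg (H r 0)).trans (hle 0)
  have hC (s : ℝ) : ∫⁻ r in Set.Icc (0:ℝ) 1, ‖H r s‖ₑ ≤ ENNReal.ofReal S := by
    have hint : IntegrableOn (fun r => H r s) (Set.Icc (0:ℝ) 1) :=
      (hH.comp (Continuous.prodMk_left s)).continuousOn.integrableOn_compact isCompact_Icc
    rw [← ofReal_integral_norm_eq_lintegral_enorm hint]
    refine ENNReal.ofReal_le_ofReal ?_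
    rw [integral_Icc_eq_integral_Ioc, ← integral_of_le zero_le_one]
    exact hle s
  have hB (r s : ℝ) : ‖H r s‖ₑ ≤ ENNReal.ofReal 2 := by
    rw [Real.enorm_eq_ofReal_abs]
    exact ENNReal.ofReal_le_ofReal (hHbd r s)
  have hcongr : ∫ τ : Fin (n + 1) → ℝ in Set.univ.pi (fun _ => Set.Icc (0:ℝ) 1),
        ∏ j, G (τ j) (τ (j + 1))
      = ∫ τ : Fin (n + 1) → ℝ, ∏ j, H (τ j) (τ (j + 1))
        ∂Measure.pi fun _ => volume.restrict (Set.Icc (0:ℝ) 1) := by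
    rw [← Measure.restrict_pi_pi, ← volume_pi]
    refine setIntegral_congr_fun (MeasurableSet.univ_pi fun _ => measurableSet_Icc) fun τ hτ => ?_
    exact Finset.prod_congr rfl fun j _ => by
      simp only [H, hc_eq (hτ j trivial), hc_eq (hτ (j + 1) trivial)]
  have hmain := lintegral_prod_cycle_le (volume.restrict (Set.Icc (0:ℝ) 1))
    (F := fun r s => ‖H r s‖ₑ) hH.enorm.measurable hB ENNReal.ofReal_ne_top hC n
  have hbound : 0 ≤ 2 * S ^ n := by positivity
  change |∫ τ : Fin (n + 1) → ℝ in Set.univ.pi (fun _ => Set.Icc (0:ℝ) 1),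
    ∏ j, G (τ j) (τ (j + 1))| ≤ 2 * S ^ n
  rw [hcongr, ← ENNReal.ofReal_le_ofReal_iff hbound,
    ← Real.enorm_eq_ofReal_abs]
  refine (enorm_integral_le_lintegral_enorm _).trans ?_
  simp only [enorm_eq_nnnorm, nnnorm_prod, ENNReal.ofNNReal_finsetProd]
  refine hmain.trans_eq ?_
  rw [ENNReal.ofReal_mul zero_le_two, ENNReal.ofReal_pow hS0]
  simp
end

section
/- Let Ω > 0, C_Ω ≥ 0, C̄₁ ≥ 0 and b > 0 with C̄₁ b ≤ 1. Let (κ_j)_{j ≥ 1} be real numbers with κ₁ = 0 and |κ_j| ≤ 2^j (j−1)! Ω^{−j} C_Ω^j (C̄₁ b)^{j−1} for all j ≥ 2. For each integer m ≥ 2 define Ξ_m by the moments-from-cumulants partition formula Ξ_m = Σ_π [ m! / ( (j₁!)^{m₁} ⋯ (j_l!)^{m_l} · m₁! ⋯ m_l! ) ] ∏_{i=1}^l κ_{j_i}^{m_i}, where the sum runs over all integer partitions π of m having distinct part sizes j₁ > ⋯ > j_l with multiplicities m₁, …, m_l. Then |Ξ_m| ≤ 2^{2m} m! Ω^{−m}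 C_Ω^m (C̄₁ b)^{⌈m/2⌉}. -/
open Finset

/-- The number of integer partitions of `n` is at most the number of compositions of `n`. -/
theorem Nat.Partition.card_le_two_pow (n : ℕ) :
    Fintype.card (Nat.Partition n) ≤ 2 ^ (n - 1) :=
  composition_card n ▸ Fintype.card_le_of_surjective _ Nat.Partition.ofComposition_surj

/-- A multiset of integers `≥ 2` has at most half as many elements as its sum. -/
theorem Multiset.sum_le_two_mul_sum_map_sub_one (s : Multiset ℕ) (hs : ∀ k ∈ s, 2 ≤ k) :
    s.sum ≤ 2 * (s.map (· - 1)).sum := by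
  rw [← Multiset.sum_map_mul_left]
  simpa using Multiset.sum_map_le_sum_map id (fun k => 2 * (k - 1))
    (fun k hk => by have := hs k hk; simp only [id]; omega)

theorem Multiset.prod_map_le_pow_sum_mul_pow_sum (f : ℕ → ℝ) (r a : ℝ) (s : Multiset ℕ)
    (hr : 0 ≤ r) (ha : 0 ≤ a) (hf0 : ∀ k ∈ s, 0 ≤ f k)
    (hf : ∀ k ∈ s, f k ≤ r ^ k * a ^ (k - 1)) :
    (s.map f).prod ≤ r ^ s.sum * a ^ (s.map (· - 1)).sum := by
  induction s using Multiset.induction_on with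
  | empty => simp
  | cons k s ih =>
    simp only [Multiset.map_cons, Multiset.prod_cons, Multiset.sum_cons, pow_add]
    calc f k * (s.map f).prod
        ≤ (r ^ k * a ^ (k - 1)) * (r ^ s.sum * a ^ (s.map (· - 1)).sum) := by
          refine mul_le_mul (hf k (Multiset.mem_cons_self k s))
            (ih (fun j hj => hf0 j (Multiset.mem_cons_of_mem hj))
              (fun j hj => hf j (Multiset.mem_cons_of_mem hj))) ?_ (by positivity)
          refine Multiset.prod_nonneg fun x hx => ?_
          obtain ⟨j, hj, rfl⟩ := Multiset.mem_map.1 hx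
          exact hf0 j (Multiset.mem_cons_of_mem hj)
      _ = _ := by ring

/-- The product of the normalized cumulants `|κ_k| / k!` over the parts of a partition. -/
theorem Nat.Partition.prod_abs_div_factorial_le {m : ℕ} (π : Nat.Partition m) (κ : ℕ → ℝ)
    (r a : ℝ) (hr : 0 ≤ r) (ha : 0 ≤ a) (ha1 : a ≤ 1) (hκ1 : κ 1 = 0)
    (hκ : ∀ k, 2 ≤ k → |κ k| / (Nat.factorial k : ℝ) ≤ r ^ k * a ^ (k - 1)) :
    (π.parts.map fun k => |κ k| / (Nat.factorial k : ℝ)).prod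
      ≤ r ^ m * a ^ ((m + 1) / 2) := by
  by_cases h1 : 1 ∈ π.parts
  · rw [Multiset.prod_eq_zero (Multiset.mem_map.2 ⟨1, h1, by simp [hκ1]⟩)]
    positivity
  · have h2 : ∀ k ∈ π.parts, 2 ≤ k := fun k hk => by
      have hpos := π.parts_pos hk
      have hne : k ≠ 1 := fun h => h1 (h ▸ hk)
      omega
    have hsum := Multiset.sum_le_two_mul_sum_map_sub_one π.parts h2
    refine (Multiset.prod_map_le_pow_sum_mul_pow_sum _ r a π.parts hr ha
      (fun k _ => by positivity) (fun k hk => hκ k (h2 k hk))).trans ?_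
    rw [π.parts_sum] at hsum ⊢
    exact mul_le_mul_of_nonneg_left (pow_le_pow_of_le_one ha ha1 (by omega)) (by positivity)

/-- A term of the moments-from-cumulants formula, after dropping the factors `m_k!`. -/
theorem Nat.Partition.abs_cumulant_term_le {m : ℕ} (π : Nat.Partition m) (κ : ℕ → ℝ) :
    |((Nat.factorial m : ℝ) /
        (∏ k ∈ π.parts.toFinset,
          (Nat.factorial k : ℝ) ^ (π.parts.count k) * (Nat.factorial (π.parts.count k) : ℝ)))
      * ∏ k ∈ π.parts.toFinset, κ k ^ (π.parts.count k)|
      ≤ (Nat.factorial m : ℝ) *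
        (π.parts.map fun k => |κ k| / (Nat.factorial k : ℝ)).prod := by
  rw [Finset.prod_multiset_map_count, div_mul_eq_mul_div, mul_div_assoc, ← Finset.prod_div_distrib,
    abs_mul, Nat.abs_cast, Finset.abs_prod]
  refine mul_le_mul_of_nonneg_left (Finset.prod_le_prod (fun _ _ => abs_nonneg _) ?_)
    (Nat.cast_nonneg _)
  intro k _
  rw [abs_div, abs_mul, abs_pow, abs_pow, Nat.abs_cast, Nat.abs_cast, div_pow]
  refine div_le_div_of_nonneg_left (by positivity) (by positivity) ?_
  exact le_mul_of_one_le_right (by positivity) (by exact_mod_cast Nat.factorial_pos _)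

/-- **Moment bound from cumulant bounds via the moments-from-cumulants partition formula.**
If `κ₁ = 0` and `|κ_j| ≤ 2^j (j−1)! Ω^{−j} C_Ω^j (C̄₁ b)^{j−1}` for `j ≥ 2`, and for `m ≥ 2`
`Ξ_m = ∑_π [m! / (∏_k (k!)^{m_k(π)} m_k(π)!)] ∏_k κ_k^{m_k(π)}` (sum over integer
partitions `π` of `m`, `m_k(π)` the multiplicity of the part `k`), then
`|Ξ_m| ≤ 2^{2m} m! Ω^{−m} C_Ω^m (C̄₁ b)^{⌈m/2⌉}`. -/
theorem moment_bound_from_cumulant_bounds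
    (Ω CΩ C₁ b : ℝ) (hΩ : 0 < Ω) (hCΩ : 0 ≤ CΩ) (hC₁ : 0 ≤ C₁) (hb : 0 < b)
    (hC₁b : C₁ * b ≤ 1)
    (κ : ℕ → ℝ) (hκ1 : κ 1 = 0)
    (hκ : ∀ j, 2 ≤ j →
      |κ j| ≤ 2 ^ j * (Nat.factorial (j - 1) : ℝ) * Ω ^ (-(j:ℤ)) * CΩ ^ j
        * (C₁ * b) ^ (j - 1))
    (Ξ : ℕ → ℝ)
    (hΞ : ∀ m, 2 ≤ m → Ξ m
      = ∑ π : Nat.Partition m,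
          ((Nat.factorial m : ℝ) /
              (∏ k ∈ π.parts.toFinset,
                (Nat.factorial k : ℝ) ^ (π.parts.count k)
                  * (Nat.factorial (π.parts.count k) : ℝ)))
            * ∏ k ∈ π.parts.toFinset, κ k ^ (π.parts.count k)) :
    ∀ m, 2 ≤ m →
      |Ξ m| ≤ 2 ^ (2 * m) * (Nat.factorial m : ℝ) * Ω ^ (-(m:ℤ)) * CΩ ^ m
        * (C₁ * b) ^ ((m + 1) / 2) := by
  intro m hm
  have ha : 0 ≤ C₁ * b := by positivity
  set a := C₁ * b
  set r : ℝ := 2 * CΩ / Ω with hr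
  have hr0 : 0 ≤ r := by positivity
  have hκ' : ∀ k, 2 ≤ k → |κ k| / (Nat.factorial k : ℝ) ≤ r ^ k * a ^ (k - 1) := by
    intro k hk
    have hfact : ((Nat.factorial (k - 1) : ℕ) : ℝ) ≤ Nat.factorial k := by
      exact_mod_cast Nat.factorial_le (Nat.sub_le k 1)
    rw [div_le_iff₀ (by positivity)]
    calc |κ k| ≤ 2 ^ k * (Nat.factorial (k - 1) : ℝ) * Ω ^ (-(k:ℤ)) * CΩ ^ k * a ^ (k - 1) :=
          hκ k hk
      _ = r ^ k * a ^ (k - 1) * (Nat.factorial (k - 1) : ℝ) := by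
          rw [hr, div_pow, mul_pow, zpow_neg, zpow_natCast]
          ring
      _ ≤ r ^ k * a ^ (k - 1) * (Nat.factorial k : ℝ) := by gcongr
  have hcard : (Fintype.card (Nat.Partition m) : ℝ) ≤ 2 ^ m := by
    exact_mod_cast (Nat.Partition.card_le_two_pow m).trans
      (Nat.pow_le_pow_right two_pos (Nat.sub_le m 1))
  rw [hΞ m hm]
  calc _ ≤ ∑ _π : Nat.Partition m, (Nat.factorial m : ℝ) * (r ^ m * a ^ ((m + 1) / 2)) :=
        (Finset.abs_sum_le_sum_abs _ _).trans <| Finset.sum_le_sum fun π _ =>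
          (π.abs_cumulant_term_le κ).trans <| mul_le_mul_of_nonneg_left
            (π.prod_abs_div_factorial_le κ r a hr0 ha hC₁b hκ1 hκ') (Nat.cast_nonneg _)
    _ = (Fintype.card (Nat.Partition m) : ℝ)
          * ((Nat.factorial m : ℝ) * (r ^ m * a ^ ((m + 1) / 2))) := by
        rw [Finset.sum_const, nsmul_eq_mul, Finset.card_univ]
    _ ≤ 2 ^ m * ((Nat.factorial m : ℝ) * (r ^ m * a ^ ((m + 1) / 2))) := by gcongr
    _ = _ := by
        rw [hr, div_pow, mul_pow, zpow_neg, zpow_natCast, two_mul, pow_add]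
        ring
end
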